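/- Let ψ be a regular N-function such that both ψ and its conjugate ψ* satisfy the Δ₂-condition. Then for every ε > 0 there exists a constant c_ε > 0, depending only on ε, Δ₂(ψ) and Δ₂(ψ*), such that t·ψ'(s) + ψ'(t)·s ≤ ε·ψ(t) + c_ε·ψ(s) for all s, t ≥ 0. -/

import Mathlib

open Real Filter Set Topology

noncomputable section

/-- An N-function: convex on `[0,∞)`, vanishing at `0`, positive on `(0,∞)`,
with `ψ t / t → 0` as `t → 0⁺` and `ψ t / t → ∞` as `t → ∞`. -/
def IsNFunction (ψ : ℝ → ℝ) : Prop :=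
  ConvexOn ℝ (Set.Ici 0) ψ ∧ ψ 0 = 0 ∧ (∀ t > 0, 0 < ψ t) ∧
    Filter.Tendsto (fun t => ψ t / t) (nhdsWithin 0 (Set.Ioi 0)) (nhds 0) ∧
    Filter.Tendsto (fun t => ψ t / t) Filter.atTop Filter.atTop

/-- A regular N-function: an N-function which is `C¹` on `[0,∞)`, `C²` on `(0,∞)`,
with `ψ'' t > 0` for all `t > 0`. -/
def IsRegularNFunction (ψ : ℝ → ℝ) : Prop :=
  IsNFunction ψ ∧ ContDiffOn ℝ 1 ψ (Set.Ici 0) ∧ ContDiffOn ℝ 2 ψ (Set.Ioi 0) ∧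
    ∀ t > 0, 0 < deriv (deriv ψ) t

/-- A balanced N-function with characteristics `(γ₁, γ₂)`. -/
def IsBalancedNFunction (ψ : ℝ → ℝ) (γ₁ γ₂ : ℝ) : Prop :=
  IsRegularNFunction ψ ∧ 0 < γ₁ ∧ γ₁ ≤ 1 ∧ 1 ≤ γ₂ ∧
    ∀ t > 0, γ₁ * deriv ψ t ≤ t * deriv (deriv ψ) t ∧
      t * deriv (deriv ψ) t ≤ γ₂ * deriv ψ t

/-- The conjugate N-function `ψ*(t) = sup_{s ≥ 0} (s·t − ψ(s))`. -/
def conjNF (ψ : ℝ → ℝ) (t : ℝ) : ℝ :=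
  ⨆ s : Set.Ici (0:ℝ), ((s : ℝ) * t - ψ s)

/-- `ψ` satisfies the Δ₂-condition with constant `K`. -/
def SatisfiesDelta2 (ψ : ℝ → ℝ) (K : ℝ) : Prop :=
  2 < K ∧ ∀ t ≥ (0:ℝ), ψ (2 * t) ≤ K * ψ t

/-- The derivative `ψ'_a(t) = ψ'(a+t)·t/(a+t)` of the shifted N-function. -/
def shiftDF (ψ : ℝ → ℝ) (a t : ℝ) : ℝ := deriv ψ (a + t) * t / (a + t)

/-- The shifted N-function `ψ_a(t) = ∫₀ᵗ ψ'(a+s)·s/(a+s) ds`. -/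
def shiftNF (ψ : ℝ → ℝ) (a t : ℝ) : ℝ := ∫ s in (0:ℝ)..t, shiftDF ψ a s

/-- Frobenius norm of a `d×n` real matrix. -/
def frobNorm {d n : ℕ} (P : Fin d → Fin n → ℝ) : ℝ :=
  Real.sqrt (∑ i : Fin d, ∑ j : Fin n, (P i j) ^ 2)

/-- Frobenius inner product `P : Q` of two `d×n` real matrices. -/
def frobInner {d n : ℕ} (P Q : Fin d → Fin n → ℝ) : ℝ :=
  ∑ i : Fin d, ∑ j : Fin n, P i j * Q i j

/-- `F(P) = √(φ'(|P|)/|P|)·P` (equal to `0` at `P = 0`). -/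
def FmapNF (φ : ℝ → ℝ) {d n : ℕ} (P : Fin d → Fin n → ℝ) : Fin d → Fin n → ℝ :=
  Real.sqrt (deriv φ (frobNorm P) / frobNorm P) • P

/-- `F*(P) = √((φ*)'(|P|)/|P|)·P` (equal to `0` at `P = 0`). -/
def FstarNF (φ : ℝ → ℝ) {d n : ℕ} (P : Fin d → Fin n → ℝ) : Fin d → Fin n → ℝ :=
  Real.sqrt (deriv (conjNF φ) (frobNorm P) / frobNorm P) • P

/-- The standard basis matrix with a `1` in entry `(k,l)`. -/
def basisMat {d n : ℕ} (k : Fin d) (l : Fin n) : Fin d → Fin n → ℝ :=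
  fun i j => if i = k ∧ j = l then 1 else 0

/-- `𝒜` has `φ`-structure with constants `(γ₃, γ₄)`. -/
def HasPhiStructure {d n : ℕ} (A : (Fin d → Fin n → ℝ) → (Fin d → Fin n → ℝ))
    (φ : ℝ → ℝ) (γ₃ γ₄ : ℝ) : Prop :=
  0 < γ₃ ∧ γ₃ ≤ 1 ∧ 1 < γ₄ ∧ Continuous A ∧
    ContDiffOn ℝ 1 A {P | P ≠ 0} ∧ A 0 = 0 ∧
    (∀ P : Fin d → Fin n → ℝ, P ≠ 0 → ∀ Q : Fin d → Fin n → ℝ,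
      γ₃ * (deriv φ (frobNorm P) / frobNorm P) * (frobNorm Q) ^ 2 ≤
        ∑ i : Fin d, ∑ j : Fin n, ∑ k : Fin d, ∑ l : Fin n,
          fderiv ℝ A P (basisMat k l) i j * Q i j * Q k l) ∧
    (∀ P : Fin d → Fin n → ℝ, P ≠ 0 → ∀ (i k : Fin d) (j l : Fin n),
      |fderiv ℝ A P (basisMat k l) i j| ≤ γ₄ * (deriv φ (frobNorm P) / frobNorm P))

lemma IsRegularNFunction.diffAt {ψ : ℝ → ℝ} (h : IsRegularNFunction ψ) {s : ℝ} (hs : 0 < s) :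
    DifferentiableAt ℝ ψ s :=
  (h.2.2.1.differentiableOn (by norm_num)).differentiableAt (Ioi_mem_nhds hs)

lemma IsRegularNFunction.tangent {ψ : ℝ → ℝ} (h : IsRegularNFunction ψ) {s r : ℝ} (hs : 0 < s)
    (hr : 0 ≤ r) : ψ s + deriv ψ s * (r - s) ≤ ψ r := by
  have hc := h.1.1
  have hd := h.diffAt hs
  rcases lt_trichotomy r s with hrs | rfl | hrs
  · have := hc.slope_le_deriv (x := r) (y := s) hr hs.le hrs hd
    rw [slope_def_field, div_le_iff₀ (by linarith)] at this
    linarith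
  · simp
  · have := hc.deriv_le_slope (x := s) (y := r) hs.le hr hrs hd
    rw [slope_def_field, le_div_iff₀ (by linarith)] at this
    linarith

lemma IsRegularNFunction.deriv_zero {ψ : ℝ → ℝ} (h : IsRegularNFunction ψ) :
    deriv ψ 0 = 0 := by
  by_cases hd : DifferentiableAt ℝ ψ 0
  · have h1 := (hasDerivWithinAt_iff_tendsto_slope' (s := Set.Ioi (0:ℝ)) (by simp)).1
      (hd.hasDerivAt.hasDerivWithinAt (s := Set.Ioi (0:ℝ)))
    refine tendsto_nhds_unique h1 ?_
    refine h.1.2.2.2.1.congr fun t => ?_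
    rw [slope_def_field, h.1.2.1]
    simp
  · exact deriv_zero_of_not_differentiableAt hd

lemma IsRegularNFunction.nonneg {ψ : ℝ → ℝ} (h : IsRegularNFunction ψ) {s : ℝ} (hs : 0 ≤ s) :
    0 ≤ ψ s := by
  rcases hs.eq_or_lt with rfl | hs
  · exact h.1.2.1.ge
  · exact (h.1.2.2.1 s hs).le

lemma IsRegularNFunction.young {ψ : ℝ → ℝ} (h : IsRegularNFunction ψ) {a t : ℝ} (ha : 0 ≤ a)
    (ht : 0 ≤ t) : t * a ≤ ψ t + conjNF ψ a := by
  have hb : BddAbove (Set.range fun s : Set.Ici (0:ℝ) => ((s : ℝ) * a - ψ s)) := by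
    obtain ⟨R, hR⟩ := Filter.eventually_atTop.1 (h.1.2.2.2.2.eventually_ge_atTop a)
    refine ⟨max R 1 * a, ?_⟩
    rintro _ ⟨⟨r, hr⟩, rfl⟩
    have hr' : 0 ≤ r := hr
    have hn := h.nonneg hr'
    simp only
    rcases le_total r (max R 1) with hrR | hrR
    · have := mul_le_mul_of_nonneg_right hrR ha
      linarith
    · have h1 := hR r ((le_max_left _ _).trans hrR)
      have h2 : 0 < r := lt_of_lt_of_le one_pos ((le_max_right R 1).trans hrR)
      rw [le_div_iff₀ h2] at h1
      have : 0 ≤ max R 1 * a := mul_nonneg (zero_le_one.trans (le_max_right _ _)) ha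
      linarith
  have := le_ciSup hb ⟨t, ht⟩
  simp only at this
  unfold conjNF
  linarith

lemma SatisfiesDelta2.iter {ψ : ℝ → ℝ} {K : ℝ} (h : SatisfiesDelta2 ψ K) (n : ℕ) {t : ℝ}
    (ht : 0 ≤ t) : ψ (2 ^ n * t) ≤ K ^ n * ψ t := by
  have hK := h.1
  induction n with
  | zero => simp
  | succ n ih =>
    have h1 := h.2 (2 ^ n * t) (by positivity)
    have h2 := mul_le_mul_of_nonneg_left ih (by linarith : 0 ≤ K)
    calc ψ (2 ^ (n + 1) * t) = ψ (2 * (2 ^ n * t)) := by ring_nf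
      _ ≤ K * (K ^ n * ψ t) := h1.trans h2
      _ = _ := by ring

/-- refined ε-Young inequality `t·ψ'(s) + ψ'(t)·s ≤ ε·ψ(t) + c_ε·ψ(s)`,
with `c_ε` depending only on `ε` and the Δ₂-constants of `ψ` and `ψ*`. -/
theorem young_eps_deriv (K₁ K₂ ε : ℝ) (hε : 0 < ε) :
    ∃ c > (0:ℝ), ∀ ψ : ℝ → ℝ, IsRegularNFunction ψ →
      SatisfiesDelta2 ψ K₁ → SatisfiesDelta2 (conjNF ψ) K₂ →
      ∀ s ≥ (0:ℝ), ∀ t ≥ (0:ℝ), t * deriv ψ s + deriv ψ t * s ≤ ε * ψ t + c * ψ s := by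
  by_cases hK : 2 < K₁ ∧ 2 < K₂
  swap
  · exact ⟨1, one_pos, fun ψ _ h1 h2 => absurd ⟨h1.1, h2.1⟩ hK⟩
  obtain ⟨hK1, hK2⟩ := hK
  have hK1' : 0 < K₁ := by linarith
  have hK2' : 0 < K₂ := by linarith
  obtain ⟨n, hn⟩ := pow_unbounded_of_one_lt (2 * K₁ / ε) (one_lt_two)
  have hn' : 2 * K₁ < 2 ^ n * ε := by rwa [div_lt_iff₀ hε] at hn
  have hP : (0:ℝ) < 2 ^ n := by positivity
  refine ⟨(K₂ ^ n * K₁ + K₁ * K₁ ^ n) / 2 ^ n, by positivity, ?_⟩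
  intro ψ h h1 h2 s hs t ht
  have nt := h.nonneg ht
  have ns := h.nonneg hs
  have hc : 0 ≤ (K₂ ^ n * K₁ + K₁ * K₁ ^ n) / 2 ^ n * ψ s := by positivity
  have hc' : 0 ≤ ε * ψ t := by positivity
  rcases hs.eq_or_lt with rfl | hs
  · rw [h.deriv_zero]; linarith
  rcases ht.eq_or_lt with rfl | ht
  · rw [h.deriv_zero]; linarith
  have hds : 0 ≤ deriv ψ s := by
    have := h.tangent hs (le_refl 0)
    rw [h.1.2.1] at this
    by_contra! hneg
    nlinarith
  -- first term
  have hstar : conjNF ψ (deriv ψ s) ≤ K₁ * ψ s := by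
    unfold conjNF
    have : Nonempty (Set.Ici (0:ℝ)) := ⟨⟨0, le_refl (0:ℝ)⟩⟩
    refine ciSup_le fun r => ?_
    have e1 := h.tangent hs r.2
    have e2 := h.tangent hs (r := 2 * s) (by linarith)
    have e3 := h1.2 s hs.le
    linarith
  have hA : t * (2 ^ n * deriv ψ s) ≤ ψ t + K₂ ^ n * (K₁ * ψ s) := by
    have e1 := h.young (a := 2 ^ n * deriv ψ s) (by positivity) ht.le
    have e2 := h2.iter n hds
    have e3 := mul_le_mul_of_nonneg_left hstar (by positivity : 0 ≤ K₂ ^ n)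
    linarith
  -- second term
  have hB : 2 ^ n * s * deriv ψ t ≤ K₁ / 2 * (ψ t + K₁ ^ n * ψ s) := by
    have hu : 0 ≤ 2 ^ n * s := by positivity
    have e1 := h.tangent ht (r := t + 2 ^ n * s) (by positivity)
    have m1 : 2 * t ∈ Set.Ici (0:ℝ) := by simp only [Set.mem_Ici]; positivity
    have m2 : 2 * (2 ^ n * s) ∈ Set.Ici (0:ℝ) := by simp only [Set.mem_Ici]; positivity
    have e2 := h.1.1.2 m1 m2 (by norm_num : (0:ℝ) ≤ 1 / 2) (by norm_num : (0:ℝ) ≤ 1 / 2)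
      (by norm_num)
    simp only [smul_eq_mul] at e2
    rw [show 1 / 2 * (2 * t) + 1 / 2 * (2 * (2 ^ n * s)) = t + 2 ^ n * s by ring] at e2
    have e3 := h1.2 t ht.le
    have e4 := h1.2 _ hu
    have e5 := mul_le_mul_of_nonneg_left (h1.iter n hs.le) hK1'.le
    linarith
  have e6 : (1 + K₁ / 2) * ψ t ≤ 2 ^ n * ε * ψ t :=
    mul_le_mul_of_nonneg_right (by linarith) nt
  have e7 : 0 ≤ K₁ * K₁ ^ n * ψ s := by positivity
  refine le_of_mul_le_mul_left ?_ hP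
  have e8 : 2 ^ n * (ε * ψ t + (K₂ ^ n * K₁ + K₁ * K₁ ^ n) / 2 ^ n * ψ s)
      = 2 ^ n * ε * ψ t + (K₂ ^ n * K₁ + K₁ * K₁ ^ n) * ψ s := by
    field_simp
  rw [e8]
  linarith

end
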